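/- Let φ be a non-trivial (non-affine) Bernstein function with φ(0) = 0 and φ(∞) = ∞, let Ψ be its inverse, let (μ_t)_{t>0} be the family of marginal laws of the subordinator associated with φ, let p ≥ 1, and assume x ↦ e^{−t x} Ψ(x)^p is integrable in a neighborhood of ∞ for all t > 0. Then the function t ↦ t²·E[ξ_t^{−p}] = t²·∫ x^{−p} μ_t(dx) is a Bernstein function if, and only if, (Ψ^p)' is concave on (0,∞). -/

import Mathlib

open MeasureTheory Set Filter

/-- A Bernstein function on `(0,∞)`: a nonnegative smooth function whose derivatives satisfy
`(−1)^{n−1} f^{(n)} ≥ 0` on `(0,∞)` for every `n ≥ 1`. -/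
def IsBernsteinFn (f : ℝ → ℝ) : Prop :=
  (∀ x : ℝ, 0 < x → 0 ≤ f x) ∧ ContDiffOn ℝ (⊤ : ℕ∞) f (Ioi 0) ∧
    ∀ n : ℕ, 1 ≤ n → ∀ x : ℝ, 0 < x → 0 ≤ (-1 : ℝ) ^ (n - 1) * iteratedDeriv n f x

/-!
Put `g = (Ψ^p)'`. Tonelli and the substitution `y = φ(l)` give
`E[ξ_t^{-p}] = Γ(p)⁻¹ ∫ l^{p-1} e^{-tφ(l)} dl = Γ(p+1)⁻¹ ∫ e^{-ty} g(y) dy`, a multiple of the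
Laplace transform `L` of `g`. The `(n+2)`-th derivative of `t² L(t)` is, up to the sign `(-1)ⁿ` and
a positive factor, the second derivative at `x = 1/t` of the average `E[g(x S)]`, where `S` is Gamma
distributed with shape `n + 1`. If `g` is concave, so are all these averages. Conversely, the
averages at `x/(n+1)` converge to `g(x)` by the Post–Widder inversion formula, so `g` is concave if
all of them are.
-/

open scoped Topology

section LaplaceMoments

/-- The moment `∫₀^∞ xⁿ e^{-tx} g(x) dx` of order `n` of the exponentially tilted density `g`; up to
the sign `(-1)ⁿ` it is the `n`-th derivative at `t` of the Laplace transform of `g`. -/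
noncomputable def laplaceMoment (g : ℝ → ℝ) (n : ℕ) (t : ℝ) : ℝ :=
  ∫ x in Ioi 0, x ^ n * (Real.exp (-t * x) * g x)

lemma pow_le_factorial_div_pow_mul_exp {a x : ℝ} (ha : 0 < a) (hx : 0 ≤ x) (n : ℕ) :
    x ^ n ≤ n.factorial / a ^ n * Real.exp (a * x) := by
  have h := Real.pow_div_factorial_le_exp (a * x) (by positivity) n
  rw [div_le_iff₀ (by positivity), mul_pow] at h
  rw [div_mul_eq_mul_div, le_div_iff₀ (by positivity)]
  linarith

variable {g : ℝ → ℝ}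
variable (hint : ∀ t : ℝ, 0 < t → IntegrableOn (fun x => Real.exp (-t * x) * g x) (Ioi 0))

include hint

lemma integrableOn_pow_mul_exp_mul (n : ℕ) {t : ℝ} (ht : 0 < t) :
    IntegrableOn (fun x => x ^ n * (Real.exp (-t * x) * g x)) (Ioi 0) := by
  refine ((hint (t / 2) (half_pos ht)).norm.const_mul (n.factorial / (t / 2) ^ n)).mono'
    ((continuous_pow n).aestronglyMeasurable.mul (hint t ht).aestronglyMeasurable) ?_
  filter_upwards [ae_restrict_mem measurableSet_Ioi] with x (hx : 0 < x)
  have hpow := pow_le_factorial_div_pow_mul_exp (half_pos ht) hx.le n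
  have hexp : Real.exp (-(t / 2) * x) = Real.exp (t / 2 * x) * Real.exp (-t * x) := by
    rw [← Real.exp_add]
    ring_nf
  rw [norm_mul, norm_mul, norm_mul, Real.norm_of_nonneg (pow_nonneg hx.le n),
    Real.norm_of_nonneg (Real.exp_nonneg _), Real.norm_of_nonneg (Real.exp_nonneg _), hexp]
  calc x ^ n * (Real.exp (-t * x) * ‖g x‖)
      ≤ n.factorial / (t / 2) ^ n * Real.exp (t / 2 * x) * (Real.exp (-t * x) * ‖g x‖) := by gcongr
    _ = _ := by ring

lemma hasDerivAt_laplaceMoment (n : ℕ) {t : ℝ} (ht : 0 < t) :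
    HasDerivAt (laplaceMoment g n) (-laplaceMoment g (n + 1) t) t := by
  have hderiv (x s : ℝ) : HasDerivAt (fun s => x ^ n * (Real.exp (-s * x) * g x))
      (-(x ^ (n + 1) * (Real.exp (-s * x) * g x))) s := by
    convert! (((hasDerivAt_neg s).mul_const x).exp.mul_const (g x)).const_mul (x ^ n) using 1
    ring
  have hbound : ∀ᵐ x ∂volume.restrict (Ioi (0 : ℝ)), ∀ s ∈ Ioi (t / 2),
      ‖-(x ^ (n + 1) * (Real.exp (-s * x) * g x))‖
        ≤ ‖x ^ (n + 1) * (Real.exp (-(t / 2) * x) * g x)‖ := by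
    filter_upwards [ae_restrict_mem measurableSet_Ioi] with x (hx : 0 < x) s (hs : t / 2 < s)
    simp only [norm_neg, norm_mul, Real.norm_eq_abs, Real.abs_exp]
    gcongr
  have h := (hasDerivAt_integral_of_dominated_loc_of_deriv_le (Ioi_mem_nhds (half_lt_self ht))
    (eventually_of_mem (Ioi_mem_nhds ht) fun s hs =>
      (integrableOn_pow_mul_exp_mul hint n hs).aestronglyMeasurable)
    (integrableOn_pow_mul_exp_mul hint n ht)
    (integrableOn_pow_mul_exp_mul hint (n + 1) ht).neg.aestronglyMeasurable hbound
    (integrableOn_pow_mul_exp_mul hint (n + 1) (half_pos ht)).norm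
    (Eventually.of_forall fun x s _ => hderiv x s)).2
  rwa [integral_neg] at h

lemma contDiffOn_laplaceMoment (n : ℕ) :
    ContDiffOn ℝ (⊤ : ℕ∞) (laplaceMoment g n) (Ioi 0) := by
  refine contDiffOn_infty.2 fun m => ?_
  induction m generalizing n with
  | zero =>
    exact contDiffOn_zero.2 fun t ht =>
      (hasDerivAt_laplaceMoment hint n ht).continuousAt.continuousWithinAt
  | succ m ih =>
    refine (contDiffOn_succ_iff_deriv_of_isOpen (n := m) isOpen_Ioi).2 ⟨fun t ht =>
      (hasDerivAt_laplaceMoment hint n ht).differentiableAt.differentiableWithinAt, nofun, ?_⟩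
    exact (ih (n + 1)).neg.congr fun t ht => (hasDerivAt_laplaceMoment hint n ht).deriv

lemma iteratedDeriv_sq_mul_laplaceMoment (n : ℕ) {t : ℝ} (ht : 0 < t) :
    iteratedDeriv (n + 2) (fun t => t ^ 2 * laplaceMoment g 0 t) t
      = (-1) ^ n * (t ^ 2 * laplaceMoment g (n + 2) t - (2 * n + 4) * t * laplaceMoment g (n + 1) t
        + (n + 1) * (n + 2) * laplaceMoment g n t) := by
  have hM (k : ℕ) {s : ℝ} (hs : 0 < s) := hasDerivAt_laplaceMoment hint k hs
  induction n generalizing t with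
  | zero =>
    have hfirst : deriv (fun t => t ^ 2 * laplaceMoment g 0 t) =ᶠ[𝓝 t]
        fun s => 2 * s * laplaceMoment g 0 s - s ^ 2 * laplaceMoment g 1 s := by
      filter_upwards [Ioi_mem_nhds ht] with s hs
      rw [((hasDerivAt_pow 2 s).fun_mul (hM 0 hs)).deriv]
      push_cast
      ring
    rw [iteratedDeriv_succ, iteratedDeriv_one, hfirst.deriv_eq,
      (((hasDerivAt_const_mul (2 : ℝ)).fun_mul (hM 0 ht)).fun_sub
        ((hasDerivAt_pow 2 t).fun_mul (hM 1 ht))).deriv]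
    push_cast
    ring
  | succ n ih =>
    have hprev : iteratedDeriv (n + 2) (fun t => t ^ 2 * laplaceMoment g 0 t) =ᶠ[𝓝 t] fun s =>
        (-1) ^ n * (s ^ 2 * laplaceMoment g (n + 2) s
          - (2 * n + 4) * s * laplaceMoment g (n + 1) s
          + (n + 1) * (n + 2) * laplaceMoment g n s) := by
      filter_upwards [Ioi_mem_nhds ht] with s hs using ih hs
    rw [iteratedDeriv_succ, hprev.deriv_eq,
      (((((hasDerivAt_pow 2 t).fun_mul (hM (n + 2) ht)).fun_sub
        ((hasDerivAt_const_mul (2 * (n : ℝ) + 4)).fun_mul (hM (n + 1) ht))).fun_add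
        ((hM n ht).const_mul (((n : ℝ) + 1) * (n + 2)))).const_mul ((-1) ^ n)).deriv]
    push_cast
    ring

end LaplaceMoments

lemma concaveOn_iff_of_hasDerivAt2 {s : Set ℝ} (hs : IsOpen s) (hconv : Convex ℝ s)
    {f f' f'' : ℝ → ℝ} (hf : ∀ x ∈ s, HasDerivAt f (f' x) x)
    (hf' : ∀ x ∈ s, HasDerivAt f' (f'' x) x) :
    ConcaveOn ℝ s f ↔ ∀ x ∈ s, f'' x ≤ 0 := by
  refine ⟨fun hconc x hx => ?_, fun h => ?_⟩
  · have hanti : AntitoneOn f' s :=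
      (hconc.antitoneOn_deriv fun y hy => (hf y hy).differentiableAt).congr
        fun y hy => (hf y hy).deriv
    rw [← (hf' x hx).deriv, ← derivWithin_of_isOpen hs hx]
    exact hanti.derivWithin_nonpos
  · rw [← hs.interior_eq] at h
    exact concaveOn_of_hasDerivWithinAt2_nonpos hconv
      (fun x hx => (hf x hx).continuousAt.continuousWithinAt)
      (fun x hx => (hf x (interior_subset hx)).hasDerivWithinAt)
      (fun x hx => (hf' x (interior_subset hx)).hasDerivWithinAt) h

lemma concaveOn_of_tendsto {ι E : Type*} [AddCommGroup E] [Module ℝ E] {l : Filter ι} [l.NeBot]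
    {s : Set E} {F : ι → E → ℝ} {f : E → ℝ} (hF : ∀ i, ConcaveOn ℝ s (F i))
    (h : ∀ x ∈ s, Tendsto (fun i => F i x) l (𝓝 (f x))) : ConcaveOn ℝ s f := by
  obtain ⟨i⟩ := l.nonempty_of_neBot
  have hs : Convex ℝ s := (hF i).1
  exact ⟨hs, fun x hx y hy _ _ ha hb hab =>
    le_of_tendsto_of_tendsto' (((h x hx).const_smul _).add ((h y hy).const_smul _))
      (h _ (hs hx hy ha hb hab)) fun i => (hF i).2 hx hy ha hb hab⟩

section GammaAverages

/-- The mean of `g (x * S)`, where `S` has the Gamma distribution of shape `n + 1` and rate `1`. -/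
noncomputable def gammaAverage (g : ℝ → ℝ) (n : ℕ) (x : ℝ) : ℝ :=
  (∫ u in Ioi 0, u ^ n * (Real.exp (-u) * g (x * u))) / n.factorial

variable {g : ℝ → ℝ}

lemma pow_mul_exp_neg_mul_eq (g : ℝ → ℝ) (n : ℕ) {x : ℝ} (hx : x ≠ 0) (u : ℝ) :
    u ^ n * (Real.exp (-u) * g (x * u))
      = x⁻¹ ^ n * ((x * u) ^ n * (Real.exp (-x⁻¹ * (x * u)) * g (x * u))) := by
  have hpow : x⁻¹ ^ n * (x * u) ^ n = u ^ n := by rw [← mul_pow, inv_mul_cancel_left₀ hx]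
  rw [neg_mul, inv_mul_cancel_left₀ hx, ← mul_assoc (x⁻¹ ^ n), hpow]

lemma gammaAverage_eq_laplaceMoment (g : ℝ → ℝ) (n : ℕ) {x : ℝ} (hx : 0 < x) :
    gammaAverage g n x = (n.factorial : ℝ)⁻¹ * (x⁻¹ ^ (n + 1) * laplaceMoment g n x⁻¹) := by
  simp only [gammaAverage, laplaceMoment, pow_mul_exp_neg_mul_eq g n hx.ne']
  rw [integral_const_mul,
    integral_comp_mul_left_Ioi (fun y => y ^ n * (Real.exp (-x⁻¹ * y) * g y)) 0 hx, mul_zero,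
    smul_eq_mul]
  ring

lemma gammaAverage_one (n : ℕ) (x : ℝ) : gammaAverage (fun _ => 1) n x = 1 := by
  have hGamma : ∫ u in Ioi (0 : ℝ), u ^ n * Real.exp (-u) = n.factorial := by
    rw [← Real.Gamma_nat_eq_factorial, Real.Gamma_eq_integral (by positivity)]
    refine setIntegral_congr_fun measurableSet_Ioi fun u _ => ?_
    simp only [add_sub_cancel_right, Real.rpow_natCast, mul_comm]
  simp only [gammaAverage, mul_one, hGamma]
  exact div_self (by positivity)

lemma image_exp_neg_Ioi : (fun v : ℝ => Real.exp (-v)) '' Ioi 0 = Ioo 0 1 := by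
  ext z
  refine ⟨?_, fun hz => ⟨-Real.log z, ?_, ?_⟩⟩
  · rintro ⟨v, hv, rfl⟩
    exact ⟨Real.exp_pos _, by simpa using hv⟩
  · exact neg_pos.2 (Real.log_neg hz.1 hz.2)
  · simp only [neg_neg, Real.exp_log hz.1]

lemma hasDerivAt_exp_neg (v : ℝ) : HasDerivAt (fun v => Real.exp (-v)) (-Real.exp (-v)) v := by
  simpa using (hasDerivAt_neg v).exp

lemma injective_exp_neg : Function.Injective fun v : ℝ => Real.exp (-v) :=
  Real.exp_injective.comp neg_injective

lemma setIntegral_Icc_zero_one_eq_integral_comp_exp_neg (F : ℝ → ℝ) :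
    ∫ z in Icc 0 1, F z = ∫ v in Ioi 0, Real.exp (-v) * F (Real.exp (-v)) := by
  rw [integral_Icc_eq_integral_Ioo, ← image_exp_neg_Ioi,
    integral_image_eq_integral_abs_deriv_smul measurableSet_Ioi
      (fun v _ => (hasDerivAt_exp_neg v).hasDerivWithinAt) injective_exp_neg.injOn]
  simp only [abs_neg, Real.abs_exp, smul_eq_mul]

lemma integrableOn_Icc_zero_one_iff_comp_exp_neg (F : ℝ → ℝ) :
    IntegrableOn F (Icc 0 1)
      ↔ IntegrableOn (fun v => Real.exp (-v) * F (Real.exp (-v))) (Ioi 0) := by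
  rw [integrableOn_Icc_iff_integrableOn_Ioo, ← image_exp_neg_Ioi,
    integrableOn_image_iff_integrableOn_abs_deriv_smul measurableSet_Ioi
      (fun v _ => (hasDerivAt_exp_neg v).hasDerivWithinAt) injective_exp_neg.injOn]
  simp only [abs_neg, Real.abs_exp, smul_eq_mul]

lemma negMulLog_exp_neg (v : ℝ) : Real.negMulLog (Real.exp (-v)) = v * Real.exp (-v) := by
  rw [Real.negMulLog, Real.log_exp, neg_mul_neg, mul_comm]

/-- The substitution `z = e^{-u/(n+1)}` moves the average to a compact interval, where the weight is
a power of the fixed function `-z log z`. -/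
lemma gammaAverage_div_succ_eq (g : ℝ → ℝ) (n : ℕ) (x : ℝ) :
    gammaAverage g n (x / (n + 1)) = (n + 1) ^ (n + 1) / n.factorial
      * ∫ z in Icc 0 1, Real.negMulLog z ^ n * g (x * -Real.log z) := by
  have hn : (0 : ℝ) < n + 1 := by positivity
  have hweight (v : ℝ) : ((n + 1) * v) ^ n
        * (Real.exp (-((n + 1) * v)) * g (x / (n + 1) * ((n + 1) * v)))
      = (n + 1) ^ n * (Real.exp (-v) * (Real.negMulLog (Real.exp (-v)) ^ n
        * g (x * -Real.log (Real.exp (-v))))) := by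
    have hexp : Real.exp (-((n + 1) * v)) = Real.exp (-v) ^ n * Real.exp (-v) := by
      rw [← pow_succ, ← Real.exp_nat_mul]
      push_cast
      ring_nf
    rw [negMulLog_exp_neg, Real.log_exp, neg_neg, hexp, ← mul_assoc (x / _),
      div_mul_cancel₀ x hn.ne', mul_pow, mul_pow]
    ring
  have hscale := integral_comp_mul_left_Ioi'
    (fun u => u ^ n * (Real.exp (-u) * g (x / (n + 1) * u))) 0 hn
  rw [mul_zero] at hscale
  rw [setIntegral_Icc_zero_one_eq_integral_comp_exp_neg, gammaAverage, ← hscale]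
  simp only [hweight, integral_const_mul, smul_eq_mul]
  ring

lemma negMulLog_lt_exp_neg_one {z : ℝ} (hz : 0 ≤ z) (hne : z ≠ Real.exp (-1)) :
    Real.negMulLog z < Real.exp (-1) := by
  rcases hz.eq_or_lt with rfl | hz
  · simpa using Real.exp_pos (-1)
  have hlog : -Real.log z - 1 ≠ 0 := fun h => hne <| by
    rw [← Real.exp_log hz, show Real.log z = -1 by linarith]
  have h := Real.add_one_lt_exp hlog
  rw [sub_add_cancel, sub_eq_add_neg, Real.exp_add, Real.exp_neg (Real.log z), Real.exp_log hz,
    ← div_eq_inv_mul, lt_div_iff₀ hz] at h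
  rw [Real.negMulLog]
  linarith

variable (hint : ∀ t : ℝ, 0 < t → IntegrableOn (fun x => Real.exp (-t * x) * g x) (Ioi 0))

include hint

lemma integrableOn_pow_mul_exp_neg_mul (n : ℕ) {x : ℝ} (hx : 0 < x) :
    IntegrableOn (fun u => u ^ n * (Real.exp (-u) * g (x * u))) (Ioi 0) := by
  have h := integrableOn_pow_mul_exp_mul hint n (inv_pos.2 hx)
  rw [← mul_zero x, ← integrableOn_Ioi_comp_mul_left_iff _ _ hx] at h
  simp only [pow_mul_exp_neg_mul_eq g n hx.ne']
  exact h.const_mul _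

lemma hasDerivAt_inv_pow_mul_laplaceMoment (k n : ℕ) {x : ℝ} (hx : 0 < x) :
    HasDerivAt (fun x => x⁻¹ ^ k * laplaceMoment g n x⁻¹)
      (x⁻¹ ^ (k + 2) * laplaceMoment g (n + 1) x⁻¹
        - k * (x⁻¹ ^ (k + 1) * laplaceMoment g n x⁻¹)) x := by
  have hinv : HasDerivAt (fun x : ℝ => x⁻¹) (-x⁻¹ ^ 2) x := by
    rw [inv_pow]
    exact hasDerivAt_inv hx.ne'
  convert! (hinv.fun_pow k).fun_mul
    ((hasDerivAt_laplaceMoment hint n (inv_pos.2 hx)).comp x hinv) using 1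
  rcases k with _ | k
  · push_cast
    ring
  · rw [Function.comp_apply, Nat.add_sub_cancel]
    ring

lemma concaveOn_gammaAverage_iff (n : ℕ) :
    ConcaveOn ℝ (Ioi 0) (gammaAverage g n) ↔ ∀ t : ℝ, 0 < t →
      0 ≤ (-1) ^ (n + 1) * iteratedDeriv (n + 2) (fun t => t ^ 2 * laplaceMoment g 0 t) t := by
  set F : ℝ → ℝ := fun t => t ^ 2 * laplaceMoment g 0 t
  have hP (k m : ℕ) {x : ℝ} (hx : x ∈ Ioi 0) := hasDerivAt_inv_pow_mul_laplaceMoment hint k m hx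
  have hderiv (x : ℝ) (hx : x ∈ Ioi 0) :=
    ((hP (n + 1) n hx).const_mul (n.factorial : ℝ)⁻¹).congr_of_eventuallyEq
      (eventually_of_mem (Ioi_mem_nhds hx) fun y hy => gammaAverage_eq_laplaceMoment g n hy)
  have hsecond {x : ℝ} (hx : x ∈ Ioi 0) :=
    ((hP (n + 3) (n + 1) hx).fun_sub
      ((hP (n + 2) n hx).const_mul ((n + 1 : ℕ) : ℝ))).const_mul (n.factorial : ℝ)⁻¹
  have hderiv2 (x : ℝ) (hx : x ∈ Ioi 0) := (hsecond hx).congr_deriv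
    (g' := -((n.factorial : ℝ)⁻¹ * x⁻¹ ^ (n + 3)
      * ((-1) ^ (n + 1) * iteratedDeriv (n + 2) F x⁻¹))) <| by
    rw [iteratedDeriv_sq_mul_laplaceMoment hint n (inv_pos.2 hx), ← mul_assoc ((-1) ^ (n + 1)),
      ← pow_add, Odd.neg_one_pow ⟨n, by ring⟩]
    push_cast
    ring
  rw [concaveOn_iff_of_hasDerivAt2 isOpen_Ioi (convex_Ioi 0) hderiv hderiv2]
  refine ⟨fun h t ht => ?_, fun h x hx => ?_⟩
  · have hconc := h t⁻¹ (inv_pos.2 ht)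
    rw [inv_inv, neg_nonpos] at hconc
    exact nonneg_of_mul_nonneg_right hconc (by positivity)
  · have hx' : 0 < x⁻¹ := inv_pos.2 hx
    exact neg_nonpos.2 (mul_nonneg (by positivity) (h x⁻¹ hx'))

lemma concaveOn_gammaAverage (hg : ConcaveOn ℝ (Ioi 0) g) (n : ℕ) :
    ConcaveOn ℝ (Ioi 0) (gammaAverage g n) := by
  refine ⟨convex_Ioi 0, fun x hx y hy a b ha hb hab => ?_⟩
  have hI {z : ℝ} (hz : z ∈ Ioi 0) := integrableOn_pow_mul_exp_neg_mul hint n hz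
  have hxy : a • x + b • y ∈ Ioi 0 := convex_Ioi 0 hx hy ha hb hab
  simp only [gammaAverage, smul_eq_mul, ← mul_div_assoc, ← add_div, ← integral_const_mul]
  rw [← integral_add ((hI hx).const_mul a) ((hI hy).const_mul b)]
  refine div_le_div_of_nonneg_right (setIntegral_mono_on
    (((hI hx).const_mul a).add ((hI hy).const_mul b)) (hI hxy) measurableSet_Ioi
    fun u hu => ?_) (by positivity)
  have hconc := hg.2 (mem_Ioi.2 (mul_pos hx hu)) (mem_Ioi.2 (mul_pos hy hu)) ha hb hab
  simp only [smul_eq_mul] at hconc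
  have hu' : 0 ≤ u := le_of_lt hu
  calc a * (u ^ n * (Real.exp (-u) * g (x * u))) + b * (u ^ n * (Real.exp (-u) * g (y * u)))
      = u ^ n * (Real.exp (-u) * (a * g (x * u) + b * g (y * u))) := by ring
    _ ≤ u ^ n * (Real.exp (-u) * g (a * (x * u) + b * (y * u))) := by gcongr
    _ = u ^ n * (Real.exp (-u) * g ((a * x + b * y) * u)) := by ring_nf

/-- Post–Widder inversion by Laplace's method: `-z log z` has its only maximum at `z = e⁻¹`, where
`x * -log z = x`. -/
lemma tendsto_gammaAverage {x : ℝ} (hx : 0 < x) (hg : ContinuousAt g x) :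
    Tendsto (fun n : ℕ => gammaAverage g n (x / (n + 1))) atTop (𝓝 (g x)) := by
  have hpeak : Real.negMulLog (Real.exp (-1)) = Real.exp (-1) := by
    rw [negMulLog_exp_neg, one_mul]
  have hmem : Real.exp (-1) ∈ Ioo 0 1 := image_exp_neg_Ioi ▸ mem_image_of_mem _ (mem_Ioi.2 one_pos)
  have hint' : IntegrableOn (fun z => g (x * -Real.log z)) (Icc 0 1) := by
    rw [integrableOn_Icc_zero_one_iff_comp_exp_neg]
    simpa using integrableOn_pow_mul_exp_neg_mul hint 0 hx
  have hcont : ContinuousAt (fun z => g (x * -Real.log z)) (Real.exp (-1)) := by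
    refine ContinuousAt.comp (f := fun z => x * -Real.log z) (by simpa using hg) ?_
    exact continuousAt_const.mul (Real.continuousAt_log (Real.exp_ne_zero _)).neg
  have h := tendsto_setIntegral_pow_smul_of_unique_maximum_of_isCompact_of_integrableOn
    (isCompact_Icc (a := (0 : ℝ)) (b := 1)) Real.continuous_negMulLog.continuousOn
    (fun z hz hne => by rw [hpeak]; exact negMulLog_lt_exp_neg_one hz.1 hne)
    (fun z hz => Real.negMulLog_nonneg hz.1 hz.2) (by rw [hpeak]; exact Real.exp_pos _)
    (by rw [interior_Icc]; exact subset_closure hmem) hint' hcont.continuousWithinAt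
  rw [Real.log_exp, neg_neg, mul_one] at h
  refine h.congr fun n => ?_
  have hone := gammaAverage_div_succ_eq (fun _ => 1) n x
  rw [gammaAverage_one] at hone
  simp only [mul_one] at hone
  rw [gammaAverage_div_succ_eq, inv_eq_of_mul_eq_one_left hone.symm]
  rfl

lemma concaveOn_of_concaveOn_gammaAverage (hg : ContinuousOn g (Ioi 0))
    (hconc : ∀ n, ConcaveOn ℝ (Ioi 0) (gammaAverage g n)) : ConcaveOn ℝ (Ioi 0) g := by
  refine concaveOn_of_tendsto (F := fun n x => gammaAverage g n (x / (n + 1))) (fun n => ?_)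
    fun x hx => tendsto_gammaAverage hint hx (hg.continuousAt (Ioi_mem_nhds hx))
  have hn : (0 : ℝ) < n + 1 := by positivity
  refine ⟨convex_Ioi 0, fun x hx y hy a b ha hb hab => ?_⟩
  have h := (hconc n).2 (mem_Ioi.2 (div_pos hx hn)) (mem_Ioi.2 (div_pos hy hn)) ha hb hab
  simpa only [smul_eq_mul, ← mul_div_assoc, ← add_div] using h

end GammaAverages

section BernsteinCriterion

lemma deriv_nonneg_of_concaveOn_Ioi {f : ℝ → ℝ} {a x : ℝ} (hf : ConcaveOn ℝ (Ioi a) f)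
    (hf0 : ∀ y, a < y → 0 ≤ f y) (hx : a < x) (hd : DifferentiableAt ℝ f x) : 0 ≤ deriv f x := by
  by_contra! hneg
  obtain ⟨y, hxy, hy⟩ : ∃ y, x < y ∧ f x + deriv f x * (y - x) < 0 := by
    refine ⟨x + ((f x + 1) / -deriv f x), ?_, ?_⟩
    · have := hf0 x hx
      have := neg_pos.2 hneg
      linarith [div_pos (show 0 < f x + 1 by linarith) this]
    · rw [add_sub_cancel_left, div_neg, mul_neg, mul_div_cancel₀ _ hneg.ne]
      linarith
  have hslope := hf.slope_le_deriv hx (hx.trans hxy) hxy hd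
  rw [slope_def_field, div_le_iff₀ (sub_pos.2 hxy)] at hslope
  linarith [hf0 y (hx.trans hxy)]

lemma concaveOn_of_iteratedDeriv_two_nonpos {f : ℝ → ℝ} {s : Set ℝ} (hs : IsOpen s)
    (hconv : Convex ℝ s) (hf : ContDiffOn ℝ 2 f s) (h : ∀ x ∈ s, iteratedDeriv 2 f x ≤ 0) :
    ConcaveOn ℝ s f := by
  have hd (x : ℝ) (hx : x ∈ s) : ContDiffAt ℝ 2 f x := hf.contDiffAt (hs.mem_nhds hx)
  have hd' : DifferentiableOn ℝ (deriv f) s :=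
    (hf.deriv_of_isOpen (m := 1) hs (by norm_num)).differentiableOn one_ne_zero
  simp only [iteratedDeriv_succ, iteratedDeriv_zero] at h
  exact (concaveOn_iff_of_hasDerivAt2 hs hconv
    (fun x hx => ((hd x hx).differentiableAt two_ne_zero).hasDerivAt)
    fun x hx => (hd'.differentiableAt (hs.mem_nhds hx)).hasDerivAt).2 h

lemma isBernsteinFn_iff_of_nonneg {f : ℝ → ℝ} (hf : ContDiffOn ℝ (⊤ : ℕ∞) f (Ioi 0))
    (hf0 : ∀ x, 0 < x → 0 ≤ f x) :
    IsBernsteinFn f ↔ ∀ n : ℕ, ∀ x, 0 < x → 0 ≤ (-1) ^ (n + 1) * iteratedDeriv (n + 2) f x := by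
  refine ⟨fun h n x hx => h.2.2 (n + 2) (by omega) x hx, fun h => ⟨hf0, hf, fun n hn x hx => ?_⟩⟩
  obtain _ | _ | n := n
  · omega
  · have hconc : ConcaveOn ℝ (Ioi 0) f :=
      concaveOn_of_iteratedDeriv_two_nonpos isOpen_Ioi (convex_Ioi 0)
        (contDiffOn_infty.1 hf 2) fun y hy => by simpa using h 0 y hy
    simpa using deriv_nonneg_of_concaveOn_Ioi hconc hf0 hx
      ((hf.contDiffAt (Ioi_mem_nhds hx)).differentiableAt (by simp))
  · exact h n x hx

lemma isBernsteinFn_congr {f₁ f₂ : ℝ → ℝ} (h : EqOn f₁ f₂ (Ioi 0)) :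
    IsBernsteinFn f₁ ↔ IsBernsteinFn f₂ := by
  have hder (n : ℕ) (x : ℝ) (hx : 0 < x) : iteratedDeriv n f₁ x = iteratedDeriv n f₂ x :=
    (eventuallyEq_of_mem (Ioi_mem_nhds hx) h).iteratedDeriv_eq n
  refine and_congr ?_ (and_congr (contDiffOn_congr h) ?_)
  · exact forall₂_congr fun x hx => by rw [h hx]
  · exact forall₄_congr fun n _ x hx => by rw [hder n x hx]

lemma IsBernsteinFn.const_mul {f : ℝ → ℝ} {c : ℝ} (hf : IsBernsteinFn f) (hc : 0 ≤ c) :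
    IsBernsteinFn fun x => c * f x := by
  refine ⟨fun x hx => mul_nonneg hc (hf.1 x hx), contDiffOn_const.mul hf.2.1, fun n hn x hx => ?_⟩
  rw [iteratedDeriv_const_mul_field, mul_left_comm]
  exact mul_nonneg hc (hf.2.2 n hn x hx)

lemma isBernsteinFn_const_mul_iff {f : ℝ → ℝ} {c : ℝ} (hc : 0 < c) :
    IsBernsteinFn (fun x => c * f x) ↔ IsBernsteinFn f := by
  refine ⟨fun h => ?_, fun h => h.const_mul hc.le⟩
  simpa only [inv_mul_cancel_left₀ hc.ne'] using h.const_mul (inv_pos.2 hc).le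

theorem isBernsteinFn_sq_mul_laplaceMoment_iff {g : ℝ → ℝ} (hg : ContinuousOn g (Ioi 0))
    (hg0 : ∀ x, 0 < x → 0 ≤ g x)
    (hint : ∀ t : ℝ, 0 < t → IntegrableOn (fun x => Real.exp (-t * x) * g x) (Ioi 0)) :
    IsBernsteinFn (fun t => t ^ 2 * laplaceMoment g 0 t) ↔ ConcaveOn ℝ (Ioi 0) g := by
  have hsmooth : ContDiffOn ℝ (⊤ : ℕ∞) (fun t => t ^ 2 * laplaceMoment g 0 t) (Ioi 0) :=
    (contDiff_id.pow 2).contDiffOn.mul (contDiffOn_laplaceMoment hint 0)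
  have hnonneg (t : ℝ) (_ : 0 < t) : 0 ≤ t ^ 2 * laplaceMoment g 0 t :=
    mul_nonneg (sq_nonneg t) <| setIntegral_nonneg measurableSet_Ioi fun x hx => by
      have := hg0 x hx
      positivity
  rw [isBernsteinFn_iff_of_nonneg hsmooth hnonneg]
  simp only [← concaveOn_gammaAverage_iff hint]
  exact ⟨concaveOn_of_concaveOn_gammaAverage hint hg, concaveOn_gammaAverage hint⟩

end BernsteinCriterion

section BernsteinFunctions

variable {φ : ℝ → ℝ}

lemma IsBernsteinFn.differentiableAt (hφ : IsBernsteinFn φ) {x : ℝ} (hx : 0 < x) :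
    DifferentiableAt ℝ φ x :=
  (hφ.2.1.contDiffAt (Ioi_mem_nhds hx)).differentiableAt (by simp)

lemma IsBernsteinFn.concaveOn (hφ : IsBernsteinFn φ) : ConcaveOn ℝ (Ioi 0) φ :=
  concaveOn_of_iteratedDeriv_two_nonpos isOpen_Ioi (convex_Ioi 0)
    (contDiffOn_infty.1 hφ.2.1 2) fun x hx => by simpa using hφ.2.2 2 one_le_two x hx

lemma IsBernsteinFn.deriv_pos (hφ : IsBernsteinFn φ) (hinf : Tendsto φ atTop atTop) {x : ℝ}
    (hx : 0 < x) : 0 < deriv φ x := by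
  obtain ⟨y, hxy, hlt⟩ :=
    ((eventually_gt_atTop x).and (hinf.eventually_gt_atTop (φ x))).exists
  refine lt_of_lt_of_le ?_
    (hφ.concaveOn.slope_le_deriv hx (hx.trans hxy) hxy (hφ.differentiableAt hx))
  rw [slope_def_field]
  exact div_pos (sub_pos.2 hlt) (sub_pos.2 hxy)

lemma IsBernsteinFn.strictMonoOn (hφ : IsBernsteinFn φ) (hinf : Tendsto φ atTop atTop) :
    StrictMonoOn φ (Ioi 0) :=
  strictMonoOn_of_deriv_pos (convex_Ioi 0)
    (fun _ hx => (hφ.differentiableAt hx).continuousAt.continuousWithinAt)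
    fun _ hx => hφ.deriv_pos hinf (by rwa [interior_Ioi] at hx)

lemma IsBernsteinFn.image_Ioi_zero (hφ : IsBernsteinFn φ) (hinf : Tendsto φ atTop atTop)
    (hzero : Tendsto φ (𝓝[>] 0) (𝓝 0)) : φ '' Ioi 0 = Ioi 0 := by
  refine Subset.antisymm ?_ ?_
  · rintro _ ⟨x, hx : 0 < x, rfl⟩
    have hhalf := half_pos hx
    exact (hφ.1 _ hhalf).trans_lt (hφ.strictMonoOn hinf hhalf hx (half_lt_self hx))
  · exact isPreconnected_Ioi.intermediate_value_Ioi (l₁ := 𝓝[>] (0 : ℝ)) (l₂ := atTop)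
      (le_principal_iff.2 self_mem_nhdsWithin) (le_principal_iff.2 (Ioi_mem_atTop 0))
      (fun x hx => (hφ.differentiableAt hx).continuousAt.continuousWithinAt) hzero hinf

end BernsteinFunctions

section LeftInverse

lemma exp_neg_mul_le_one {t x : ℝ} (ht : 0 ≤ t) (hx : 0 ≤ x) : Real.exp (-t * x) ≤ 1 :=
  Real.exp_le_one_iff.2 (mul_nonpos_of_nonpos_of_nonneg (neg_nonpos.2 ht) hx)

lemma setLIntegral_Ici_mul_exp_neg_mul {t : ℝ} (ht : 0 < t) (a : ℝ) :
    ∫⁻ y in Ici a, ENNReal.ofReal (t * Real.exp (-t * y)) = ENNReal.ofReal (Real.exp (-t * a)) := by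
  have hint : IntegrableOn (fun y => Real.exp (-t * y)) (Ioi a) :=
    integrableOn_exp_mul_Ioi (neg_neg_of_pos ht) a
  rw [setLIntegral_congr Ioi_ae_eq_Ici.symm, ← ofReal_integral_eq_lintegral_ofReal
    (hint.const_mul t) (Eventually.of_forall fun y => by positivity), integral_const_mul,
    integral_exp_mul_Ioi (neg_neg_of_pos ht)]
  congr 1
  field_simp

variable {φ Ψ : ℝ → ℝ} {p t : ℝ}

lemma hasDerivAt_of_leftInvOn {s : Set ℝ} (hs : IsOpen s) (hφ : ContDiffOn ℝ 1 φ s)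
    (hΨ : LeftInvOn Ψ φ s) {x : ℝ} (hx : x ∈ s) (hφ' : deriv φ x ≠ 0) :
    HasDerivAt Ψ (deriv φ x)⁻¹ (φ x) :=
  (((hφ.contDiffAt (hs.mem_nhds hx)).hasStrictDerivAt one_ne_zero).to_local_left_inverse hφ'
    (eventually_of_mem (hs.mem_nhds hx) hΨ)).hasDerivAt

lemma leftInvOn_mem_Ioi (himage : φ '' Ioi 0 = Ioi 0) (hΨ : LeftInvOn Ψ φ (Ioi 0)) {y : ℝ}
    (hy : 0 < y) : 0 < Ψ y ∧ φ (Ψ y) = y := by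
  obtain ⟨x, hx, rfl⟩ : y ∈ φ '' Ioi 0 := himage.symm.subset hy
  rw [hΨ hx]
  exact ⟨hx, rfl⟩

variable (hφ : ContDiffOn ℝ 1 φ (Ioi 0)) (hφ' : ∀ x, 0 < x → 0 < deriv φ x)
  (himage : φ '' Ioi 0 = Ioi 0) (hΨ : LeftInvOn Ψ φ (Ioi 0))

include hφ hφ' himage hΨ

lemma hasDerivAt_leftInverse_rpow (p : ℝ) {y : ℝ} (hy : 0 < y) :
    HasDerivAt (fun y => Ψ y ^ p) ((deriv φ (Ψ y))⁻¹ * p * Ψ y ^ (p - 1)) y := by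
  obtain ⟨hpos, hright⟩ := leftInvOn_mem_Ioi himage hΨ hy
  have h := hasDerivAt_of_leftInvOn isOpen_Ioi hφ hΨ hpos (hφ' _ hpos).ne'
  rw [hright] at h
  exact h.rpow_const (Or.inl hpos.ne')

lemma deriv_leftInverse_rpow_nonneg (hp : 0 ≤ p) {y : ℝ} (hy : 0 < y) :
    0 ≤ deriv (fun y => Ψ y ^ p) y := by
  have hpos := (leftInvOn_mem_Ioi himage hΨ hy).1
  have hd := hφ' _ hpos
  rw [(hasDerivAt_leftInverse_rpow hφ hφ' himage hΨ p hy).deriv]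
  positivity

lemma exp_neg_mul_deriv_leftInverse_rpow_nonneg_ae (hp : 0 ≤ p) (t : ℝ) :
    0 ≤ᵐ[volume.restrict (Ioi 0)] fun y => Real.exp (-t * y) * deriv (fun y => Ψ y ^ p) y := by
  filter_upwards [ae_restrict_mem measurableSet_Ioi] with y hy
  have := deriv_leftInverse_rpow_nonneg hφ hφ' himage hΨ hp hy
  positivity

lemma continuousOn_leftInverse : ContinuousOn Ψ (Ioi 0) := by
  intro y hy
  obtain ⟨hpos, hright⟩ := leftInvOn_mem_Ioi himage hΨ hy
  rw [← hright]
  exact (hasDerivAt_of_leftInvOn isOpen_Ioi hφ hΨ hpos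
    (hφ' _ hpos).ne').continuousAt.continuousWithinAt

lemma continuousOn_deriv_leftInverse_rpow (p : ℝ) :
    ContinuousOn (deriv fun y => Ψ y ^ p) (Ioi 0) := by
  have hmaps : MapsTo Ψ (Ioi 0) (Ioi 0) := fun y hy => (leftInvOn_mem_Ioi himage hΨ hy).1
  have hcont := continuousOn_leftInverse hφ hφ' himage hΨ
  have hderiv : ContinuousOn (fun y => deriv φ (Ψ y)) (Ioi 0) :=
    (hφ.continuousOn_deriv_of_isOpen isOpen_Ioi le_rfl).comp hcont hmaps
  have hformula : ContinuousOn (fun y => (deriv φ (Ψ y))⁻¹ * p * Ψ y ^ (p - 1)) (Ioi 0) :=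
    ((hderiv.inv₀ fun y hy => (hφ' _ (hmaps hy)).ne').mul continuousOn_const).mul
      (hcont.rpow_const fun y hy => Or.inl (hmaps hy).ne')
  exact hformula.congr fun y hy => (hasDerivAt_leftInverse_rpow hφ hφ' himage hΨ p hy).deriv

lemma lintegral_exp_neg_mul_deriv_leftInverse_rpow (hp : 0 ≤ p) (t : ℝ) :
    ∫⁻ y in Ioi 0, ENNReal.ofReal (Real.exp (-t * y) * deriv (fun y => Ψ y ^ p) y)
      = ENNReal.ofReal p * ∫⁻ l in Ioi 0, ENNReal.ofReal (l ^ (p - 1) * Real.exp (-t * φ l)) := by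
  have hderiv (l : ℝ) (hl : l ∈ Ioi 0) : HasDerivAt φ (deriv φ l) l :=
    ((hφ.contDiffAt (Ioi_mem_nhds hl)).differentiableAt one_ne_zero).hasDerivAt
  conv_lhs => rw [← himage]
  rw [lintegral_image_eq_lintegral_abs_deriv_mul measurableSet_Ioi
      (fun l hl => (hderiv l hl).hasDerivWithinAt) hΨ.injOn,
    ← lintegral_const_mul' _ _ ENNReal.ofReal_ne_top]
  refine setLIntegral_congr_fun measurableSet_Ioi fun l (hl : 0 < l) => ?_
  have hd := hφ' l hl
  have himg : 0 < φ l := himage.subset (mem_image_of_mem φ hl)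
  simp only [(hasDerivAt_leftInverse_rpow hφ hφ' himage hΨ p himg).deriv, hΨ hl, abs_of_pos hd,
    ← ENNReal.ofReal_mul hd.le, ← ENNReal.ofReal_mul hp]
  congr 1
  field_simp

omit hφ hφ' in
lemma setOf_le_leftInverse_inter_Ioi (hmono : StrictMonoOn φ (Ioi 0)) {l : ℝ} (hl : 0 < l) :
    {y | l ≤ Ψ y} ∩ Ioi 0 = Ici (φ l) := by
  have hφl : 0 < φ l := himage.subset (mem_image_of_mem φ hl)
  ext y
  constructor
  · rintro ⟨hle, hy⟩
    obtain ⟨hpos, hright⟩ := leftInvOn_mem_Ioi himage hΨ hy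
    exact ((hmono.le_iff_le hl hpos).2 hle).trans_eq hright
  · intro hy
    obtain ⟨hpos, hright⟩ := leftInvOn_mem_Ioi himage hΨ (hφl.trans_le hy)
    exact ⟨(hmono.le_iff_le hl hpos).1 (hy.trans_eq hright.symm), hφl.trans_le hy⟩

lemma lintegral_exp_neg_mul_leftInverse_rpow (hp : 0 < p) (ht : 0 < t) :
    ENNReal.ofReal t * ∫⁻ y in Ioi 0, ENNReal.ofReal (Real.exp (-t * y) * Ψ y ^ p)
      = ENNReal.ofReal p * ∫⁻ l in Ioi 0, ENNReal.ofReal (l ^ (p - 1) * Real.exp (-t * φ l)) := by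
  have hmono : StrictMonoOn φ (Ioi 0) := strictMonoOn_of_deriv_pos (convex_Ioi 0)
    hφ.continuousOn fun x hx => hφ' x (by rwa [interior_Ioi] at hx)
  have hcont := continuousOn_leftInverse hφ hφ' himage hΨ
  let ν : Measure ℝ := (volume.restrict (Ioi 0)).withDensity
    fun y => ENNReal.ofReal (t * Real.exp (-t * y))
  have hνac : ν ≪ volume.restrict (Ioi 0) := withDensity_absolutelyContinuous _ _
  have htail (l : ℝ) (hl : 0 < l) : ν {y | l ≤ Ψ y} = ENNReal.ofReal (Real.exp (-t * φ l)) := by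
    rw [withDensity_apply', Measure.restrict_restrict' measurableSet_Ioi,
      setOf_le_leftInverse_inter_Ioi himage hΨ hmono hl]
    exact setLIntegral_Ici_mul_exp_neg_mul ht (φ l)
  have hΨ0 : 0 ≤ᵐ[ν] Ψ := hνac.ae_le <| by
    filter_upwards [ae_restrict_mem measurableSet_Ioi] with y hy
    exact (leftInvOn_mem_Ioi himage hΨ hy).1.le
  have hlayer := lintegral_rpow_eq_lintegral_meas_le_mul ν hΨ0
    ((hcont.aemeasurable measurableSet_Ioi).mono_ac hνac) hp
  calc _ = ∫⁻ y, ENNReal.ofReal (Ψ y ^ p) ∂ν := by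
        rw [lintegral_withDensity_eq_lintegral_mul₀ (by fun_prop)
          ((hcont.aemeasurable measurableSet_Ioi).pow_const p).ennreal_ofReal,
          ← lintegral_const_mul' _ _ ENNReal.ofReal_ne_top]
        refine setLIntegral_congr_fun measurableSet_Ioi fun y _ => ?_
        rw [Pi.mul_apply, ← ENNReal.ofReal_mul ht.le, ← ENNReal.ofReal_mul (by positivity),
          mul_assoc]
    _ = _ := by
        rw [hlayer]
        congr 1
        refine setLIntegral_congr_fun measurableSet_Ioi fun l (hl : 0 < l) => ?_
        rw [htail l hl, mul_comm, ENNReal.ofReal_mul (by positivity)]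

lemma integrableOn_exp_neg_mul_leftInverse_rpow (hp : 0 ≤ p) (ht : 0 ≤ t)
    (hint : IntegrableOn (fun y => Real.exp (-t * y) * Ψ y ^ p) (Ioi 1)) :
    IntegrableOn (fun y => Real.exp (-t * y) * Ψ y ^ p) (Ioi 0) := by
  have hderiv (y : ℝ) (hy : 0 < y) := hasDerivAt_leftInverse_rpow hφ hφ' himage hΨ p hy
  have hcont : ContinuousOn (fun y => Ψ y ^ p) (Ioi 0) := fun y hy =>
    (hderiv y hy).continuousAt.continuousWithinAt
  have hmono : MonotoneOn (fun y => Ψ y ^ p) (Ioi 0) := monotoneOn_of_deriv_nonneg (convex_Ioi 0)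
    hcont (fun y hy => (hderiv y (interior_subset hy)).differentiableAt.differentiableWithinAt)
    fun y hy => deriv_leftInverse_rpow_nonneg hφ hφ' himage hΨ hp (interior_subset hy)
  rw [← Ioc_union_Ioi_eq_Ioi zero_le_one]
  refine IntegrableOn.union (IntegrableOn.of_bound (by simp) ?_ (Ψ 1 ^ p) ?_) hint
  · exact (((by fun_prop : Continuous fun y => Real.exp (-t * y)).continuousOn.mul
      hcont).mono Ioc_subset_Ioi_self).aestronglyMeasurable measurableSet_Ioc
  · filter_upwards [ae_restrict_mem measurableSet_Ioc] with y hy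
    have hpow : 0 ≤ Ψ y ^ p := Real.rpow_nonneg (leftInvOn_mem_Ioi himage hΨ hy.1).1.le p
    rw [Real.norm_of_nonneg (by positivity)]
    exact (mul_le_of_le_one_left hpow (exp_neg_mul_le_one ht hy.1.le)).trans
      (hmono hy.1 (mem_Ioi.2 one_pos) hy.2)

lemma integrableOn_exp_neg_mul_deriv_leftInverse_rpow (hp : 0 < p) (ht : 0 < t)
    (hint : IntegrableOn (fun y => Real.exp (-t * y) * Ψ y ^ p) (Ioi 1)) :
    IntegrableOn (fun y => Real.exp (-t * y) * deriv (fun y => Ψ y ^ p) y) (Ioi 0) := by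
  have hmeas : ContinuousOn (fun y => Real.exp (-t * y) * deriv (fun y => Ψ y ^ p) y) (Ioi 0) :=
    (by fun_prop : Continuous fun y => Real.exp (-t * y)).continuousOn.mul
      (continuousOn_deriv_leftInverse_rpow hφ hφ' himage hΨ p)
  have hnonneg := exp_neg_mul_deriv_leftInverse_rpow_nonneg_ae hφ hφ' himage hΨ hp.le t
  rw [IntegrableOn, ← lintegral_ofReal_ne_top_iff_integrable
      (hmeas.aestronglyMeasurable measurableSet_Ioi) hnonneg,
    lintegral_exp_neg_mul_deriv_leftInverse_rpow hφ hφ' himage hΨ hp.le,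
    ← lintegral_exp_neg_mul_leftInverse_rpow hφ hφ' himage hΨ hp ht]
  exact ENNReal.mul_ne_top ENNReal.ofReal_ne_top (Integrable.lintegral_lt_top
    (integrableOn_exp_neg_mul_leftInverse_rpow hφ hφ' himage hΨ hp.le ht.le hint)).ne

end LeftInverse

section NegativeMoments

variable {μ : Measure ℝ} [IsFiniteMeasure μ] {p l : ℝ}

lemma lintegral_rpow_sub_one_mul_exp_neg_mul {x : ℝ} (hp : 0 < p) (hx : 0 < x) :
    ∫⁻ l in Ioi 0, ENNReal.ofReal (l ^ (p - 1) * Real.exp (-l * x))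
      = ENNReal.ofReal (Real.Gamma p * x ^ (-p)) := by
  have hval : ∫ l in Ioi 0, l ^ (p - 1) * Real.exp (-l * x) = Real.Gamma p * x ^ (-p) := by
    have h := Real.integral_rpow_mul_exp_neg_mul_Ioi hp hx
    rw [one_div, Real.inv_rpow hx.le, ← Real.rpow_neg hx.le, mul_comm] at h
    simpa only [neg_mul, mul_comm x] using h
  have hint : IntegrableOn (fun l => l ^ (p - 1) * Real.exp (-l * x)) (Ioi 0) :=
    Integrable.of_integral_ne_zero (by rw [hval]; positivity)
  rw [← hval, ofReal_integral_eq_lintegral_ofReal hint]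
  filter_upwards [ae_restrict_mem measurableSet_Ioi] with l (hl : 0 < l)
  positivity

lemma integrable_exp_neg_mul (hμ : ∀ᵐ x ∂μ, 0 ≤ x) (hl : 0 ≤ l) :
    Integrable (fun x => Real.exp (-l * x)) μ := by
  refine .of_bound (by fun_prop) 1 ?_
  filter_upwards [hμ] with x hx
  simpa using exp_neg_mul_le_one hl hx

lemma continuousOn_integral_exp_neg_mul (hμ : ∀ᵐ x ∂μ, 0 ≤ x) :
    ContinuousOn (fun l => ∫ x, Real.exp (-l * x) ∂μ) (Ici 0) := by
  refine continuousOn_of_dominated (bound := fun _ => 1) (fun l _ => by fun_prop)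
    (fun l (hl : 0 ≤ l) => ?_) (integrable_const 1) (Eventually.of_forall fun x => by fun_prop)
  filter_upwards [hμ] with x hx
  simpa using exp_neg_mul_le_one hl hx

lemma lintegral_rpow_neg_eq (hμ : ∀ᵐ x ∂μ, 0 < x) (hp : 0 < p) :
    ENNReal.ofReal (Real.Gamma p) * ∫⁻ x, ENNReal.ofReal (x ^ (-p)) ∂μ
      = ∫⁻ l in Ioi 0, ENNReal.ofReal (l ^ (p - 1) * ∫ x, Real.exp (-l * x) ∂μ) := by
  have hΓ := Real.Gamma_pos_of_pos hp
  calc _ = ∫⁻ x, ENNReal.ofReal (Real.Gamma p * x ^ (-p)) ∂μ := by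
        simp only [ENNReal.ofReal_mul hΓ.le]
        rw [lintegral_const_mul' _ _ ENNReal.ofReal_ne_top]
    _ = ∫⁻ x, (∫⁻ l in Ioi 0, ENNReal.ofReal (l ^ (p - 1) * Real.exp (-l * x))) ∂μ := by
        refine lintegral_congr_ae (hμ.mono fun x hx => ?_)
        exact (lintegral_rpow_sub_one_mul_exp_neg_mul hp hx).symm
    _ = ∫⁻ l in Ioi 0, ∫⁻ x, ENNReal.ofReal (l ^ (p - 1) * Real.exp (-l * x)) ∂μ :=
        lintegral_lintegral_swap (by fun_prop)
    _ = _ := by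
        refine setLIntegral_congr_fun measurableSet_Ioi fun l (hl : 0 < l) => ?_
        rw [← integral_const_mul, ofReal_integral_eq_lintegral_ofReal
          ((integrable_exp_neg_mul (hμ.mono fun x => le_of_lt) hl.le).const_mul _)]
        exact Eventually.of_forall fun x => by positivity

end NegativeMoments

section Subordinators

variable {φ Ψ : ℝ → ℝ} {p : ℝ}

lemma tendsto_nhdsGT_zero_of_integral_exp_neg_mul_eq {μ : Measure ℝ} [IsProbabilityMeasure μ]
    (hμ : ∀ᵐ x ∂μ, 0 ≤ x)
    (hlaplace : ∀ l, 0 < l → ∫ x, Real.exp (-l * x) ∂μ = Real.exp (-φ l)) :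
    Tendsto φ (𝓝[>] 0) (𝓝 0) := by
  have hL := ((continuousOn_integral_exp_neg_mul hμ) 0 self_mem_Ici).mono_left
    (nhdsWithin_mono 0 Ioi_subset_Ici_self)
  simp only [neg_zero, zero_mul, Real.exp_zero, integral_const, probReal_univ, smul_eq_mul,
    mul_one] at hL
  have hlog := ((Real.continuousAt_log one_ne_zero).tendsto.comp hL).neg
  rw [Real.log_one, neg_zero] at hlog
  refine hlog.congr' ?_
  filter_upwards [self_mem_nhdsWithin] with l hl
  rw [Function.comp_apply, hlaplace l hl, Real.log_exp, neg_neg]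

lemma toReal_lintegral_rpow_neg_eq {μ : Measure ℝ} [IsFiniteMeasure μ] {t : ℝ}
    (hφ : ContDiffOn ℝ 1 φ (Ioi 0)) (hφ' : ∀ x, 0 < x → 0 < deriv φ x)
    (himage : φ '' Ioi 0 = Ioi 0) (hΨ : LeftInvOn Ψ φ (Ioi 0)) (hμ : ∀ᵐ x ∂μ, 0 < x)
    (hlaplace : ∀ l, 0 < l → ∫ x, Real.exp (-l * x) ∂μ = Real.exp (-t * φ l)) (hp : 0 < p)
    (hint : IntegrableOn (fun y => Real.exp (-t * y) * deriv (fun y => Ψ y ^ p) y) (Ioi 0)) :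
    (∫⁻ x, ENNReal.ofReal (x ^ (-p)) ∂μ).toReal
      = (Real.Gamma (p + 1))⁻¹ * laplaceMoment (deriv fun y => Ψ y ^ p) 0 t := by
  have hΓ := Real.Gamma_pos_of_pos hp
  have hnonneg := exp_neg_mul_deriv_leftInverse_rpow_nonneg_ae hφ hφ' himage hΨ hp.le t
  have hmoment : ENNReal.ofReal p * (ENNReal.ofReal (Real.Gamma p) *
      ∫⁻ x, ENNReal.ofReal (x ^ (-p)) ∂μ)
        = ∫⁻ y in Ioi 0, ENNReal.ofReal (Real.exp (-t * y) * deriv (fun y => Ψ y ^ p) y) := by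
    rw [lintegral_rpow_neg_eq hμ hp,
      lintegral_exp_neg_mul_deriv_leftInverse_rpow hφ hφ' himage hΨ hp.le]
    congr 1
    exact setLIntegral_congr_fun measurableSet_Ioi fun l hl => by rw [hlaplace l hl]
  apply_fun ENNReal.toReal at hmoment
  rw [ENNReal.toReal_mul, ENNReal.toReal_mul, ENNReal.toReal_ofReal hp.le,
    ENNReal.toReal_ofReal hΓ.le, ← integral_eq_lintegral_of_nonneg_ae hnonneg
      hint.aestronglyMeasurable] at hmoment
  simp only [laplaceMoment, pow_zero, one_mul]
  rw [Real.Gamma_add_one hp.ne', ← hmoment]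
  field_simp

end Subordinators

theorem stmt_8_general (φ Ψ : ℝ → ℝ) (hφ : IsBernsteinFn φ) (hinf : Tendsto φ atTop atTop)
    (hΨ : LeftInvOn Ψ φ (Ioi 0)) (μ : ℝ → Measure ℝ)
    (hprob : ∀ t : ℝ, 0 < t → IsProbabilityMeasure (μ t))
    (hsupp : ∀ t : ℝ, 0 < t → ∀ᵐ x ∂μ t, 0 < x)
    (hlaplace : ∀ t : ℝ, 0 < t → ∀ l : ℝ, 0 < l →
      ∫ x, Real.exp (-l * x) ∂(μ t) = Real.exp (-t * φ l))
    (p : ℝ) (hp : 0 < p)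
    (hint : ∀ t : ℝ, 0 < t → IntegrableOn (fun x => Real.exp (-t * x) * Ψ x ^ p) (Ioi 1)) :
    IsBernsteinFn (fun t => t ^ 2 * (∫⁻ x, ENNReal.ofReal (x ^ (-p)) ∂(μ t)).toReal) ↔
      ConcaveOn ℝ (Ioi 0) (deriv (fun y => Ψ y ^ p)) := by
  have := hprob 1 one_pos
  have hzero : Tendsto φ (𝓝[>] 0) (𝓝 0) := tendsto_nhdsGT_zero_of_integral_exp_neg_mul_eq
    ((hsupp 1 one_pos).mono fun x => le_of_lt) fun l hl => by simpa using hlaplace 1 one_pos l hl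
  have himage := hφ.image_Ioi_zero hinf hzero
  have hφ₁ : ContDiffOn ℝ 1 φ (Ioi 0) := contDiffOn_infty.1 hφ.2.1 1
  have hφ' (x : ℝ) (hx : 0 < x) := hφ.deriv_pos hinf hx
  have hintegrable (t : ℝ) (ht : 0 < t) :=
    integrableOn_exp_neg_mul_deriv_leftInverse_rpow hφ₁ hφ' himage hΨ hp ht (hint t ht)
  have hcriterion := isBernsteinFn_sq_mul_laplaceMoment_iff
    (continuousOn_deriv_leftInverse_rpow hφ₁ hφ' himage hΨ p)
    (fun y hy => deriv_leftInverse_rpow_nonneg hφ₁ hφ' himage hΨ hp.le hy) hintegrable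
  have hΓ : 0 < (Real.Gamma (p + 1))⁻¹ := inv_pos.2 (Real.Gamma_pos_of_pos (by positivity))
  refine (isBernsteinFn_congr fun t ht => ?_).trans
    ((isBernsteinFn_const_mul_iff hΓ).trans hcriterion)
  have := hprob t ht
  rw [mul_left_comm, toReal_lintegral_rpow_neg_eq hφ₁ hφ' himage hΨ (hsupp t ht) (hlaplace t ht) hp
    (hintegrable t ht)]

/-- Let `φ` be a non-affine Bernstein function with `φ(0) = 0`, `φ(∞) = ∞`,
inverse `Ψ`, marginal subordinator laws `(μ_t)_{t>0}`, let `p ≥ 1`, and assume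
`x ↦ e^{−tx} Ψ(x)^p` is integrable near `∞` for all `t > 0`. Then `t ↦ t²·E[ξ_t^{−p}]` is a
Bernstein function if, and only if, `(Ψ^p)'` is concave on `(0,∞)`. -/
theorem stmt_8 (φ Ψ : ℝ → ℝ) (hφ : IsBernsteinFn φ)
    (hnonaffine : ¬∃ c d : ℝ, ∀ x : ℝ, 0 ≤ x → φ x = c + d * x)
    (h0 : φ 0 = 0) (hinf : Tendsto φ atTop atTop) (hinv : Set.InvOn Ψ φ (Ici 0) (Ici 0))
    (μ : ℝ → Measure ℝ) (hprob : ∀ t : ℝ, 0 < t → IsProbabilityMeasure (μ t))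
    (hsupp : ∀ t : ℝ, 0 < t → μ t {x | x ≤ 0} = 0)
    (hlaplace : ∀ t : ℝ, 0 < t → ∀ l : ℝ, 0 ≤ l →
      ∫ x, Real.exp (-l * x) ∂(μ t) = Real.exp (-t * φ l))
    (p : ℝ) (hp : 1 ≤ p)
    (hint : ∀ t : ℝ, 0 < t → IntegrableOn (fun x => Real.exp (-t * x) * Ψ x ^ p) (Ioi 1)) :
    IsBernsteinFn (fun t => t ^ 2 * (∫⁻ x, ENNReal.ofReal (x ^ (-p)) ∂(μ t)).toReal) ↔
      ConcaveOn ℝ (Ioi 0) (deriv (fun y => Ψ y ^ p)) :=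
  stmt_8_general φ Ψ hφ hinf (hinv.1.mono Ioi_subset_Ici_self) μ hprob
    (fun t ht => by simpa [ae_iff] using hsupp t ht) (fun t ht l hl => hlaplace t ht l hl.le) p
    (one_pos.trans_le hp) hint
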